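/- Let S be a finite index set with |S| ≥ 2, let Dom_i (i ∈ S) be finite domains, let M ⊆ Π_{i∈S} Dom_i be a matching, and fix ℓ ∈ S. For each i ∈ S∖{ℓ} define the unary relation W_i = Dom_i ∖ π_i(M) (the complement of the projection of M onto coordinate i) and the binary relation M_{ℓj} = π_{{ℓ,j}}(M) ⊆ Dom_ℓ × Dom_j for j ∈ S∖{ℓ}. Then for every tuple x ∈ Π_{i∈S} Dom_i: x ∉ M if and only if either (∃ i ∈ S∖{ℓ} with x_i ∈ W_i), or there exists y : S∖{ℓ} → Dom_ℓ such that (y_j, x_j) ∈ M_{ℓj} for all j ∈ S∖{ℓ} and NAE holds for the tuple (x_ℓ, (y_j)_{j ∈ S∖{ℓ}}), i.e., ¬(∀ j ∈ S∖{ℓ}, y_j = x_ℓ). -/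

import Mathlib

/-- A relation `M ⊆ Π_{i∈S} Dom i` is a matching if any two of its tuples are
either equal or differ in every coordinate. -/
def IsMatching {S : Type*} {Dom : S → Type*} (M : Set ((i : S) → Dom i)) : Prop :=
  ∀ x ∈ M, ∀ y ∈ M, x = y ∨ ∀ i : S, x i ≠ y i

/-- Rewriting the negation of a matching via not-all-equal:
for a matching `M` on coordinates `S` (`|S| ≥ 2`) and a fixed `ℓ ∈ S`,
a tuple `x` is not in `M` iff either some coordinate value `x i` (`i ≠ ℓ`) is outside
the projection `π_i M` (i.e. in `W_i = Dom_i ∖ π_i M`), or there is a tuple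
`y : S∖{ℓ} → Dom ℓ` with `(y j, x j) ∈ π_{ℓ,j} M` for all `j ≠ ℓ` and
`NAE(x ℓ, (y j)_{j ≠ ℓ})`, i.e. not all `y j` equal `x ℓ`. -/
theorem not_mem_matching_iff_NAE
    {S : Type*} [Fintype S] {Dom : S → Type*}
    (hS : 2 ≤ Fintype.card S)
    (M : Set ((i : S) → Dom i)) (hM : IsMatching M) (ℓ : S)
    (x : (i : S) → Dom i) :
    x ∉ M ↔
      (∃ i : S, i ≠ ℓ ∧ ∀ m ∈ M, m i ≠ x i) ∨
      (∃ y : S → Dom ℓ,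
        (∀ j : S, j ≠ ℓ → ∃ m ∈ M, m ℓ = y j ∧ m j = x j) ∧
        ¬ (∀ j : S, j ≠ ℓ → y j = x ℓ)) := by
  classical
  constructor
  · intro hx
    by_cases h : ∃ i : S, i ≠ ℓ ∧ ∀ m ∈ M, m i ≠ x i
    · exact Or.inl h
    · right
      have h' : ∀ j : S, j ≠ ℓ → ∃ m ∈ M, m j = x j := by
        intro j hj
        by_contra hc
        exact h ⟨j, hj, fun m hm e => hc ⟨m, hm, e⟩⟩
      choose f hf hfx using h'
      refine ⟨fun j => if hj : j ≠ ℓ then f j hj ℓ else x ℓ, ?_, ?_⟩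
      · intro j hj
        exact ⟨f j hj, hf j hj, by simp [hj], hfx j hj⟩
      · intro hall
        have hall' : ∀ j (hj : j ≠ ℓ), f j hj ℓ = x ℓ := by
          intro j hj
          have := hall j hj
          simpa [hj] using this
        have : Nontrivial S := Fintype.one_lt_card_iff_nontrivial.mp hS
        obtain ⟨k, hk⟩ := exists_ne ℓ
        apply hx
        have e : f k hk = x := by
          funext j
          by_cases hj : j = ℓ
          · subst hj
            exact hall' k hk
          · rcases hM _ (hf k hk) _ (hf j hj) with e | e
            · rw [e]
              exact hfx j hj
            · exact absurd ((hall' k hk).trans (hall' j hj).symm) (e ℓ)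
        rw [← e]
        exact hf k hk
  · rintro (⟨i, _, hi⟩ | ⟨y, hy, hne⟩) hx
    · exact hi x hx rfl
    · apply hne
      intro j hj
      obtain ⟨m, hm, h1, h2⟩ := hy j hj
      rcases hM m hm x hx with e | e
      · rw [← h1, e]
      · exact absurd h2 (e j)
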